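/- Let p > 3 and h ∈ (1, p−1). For every c > 0 there exists L₀ ≥ 1 such that for all L ≥ L₀ and all m ≥ 0: ∫_{m}^{m+1} ∫_{−β}^{m} (L + β − α)^{1−p} ⟨α⟩^{−h} (β−m)^{−1/2} dα dβ ≤ c ⟨m⟩^{−h}. -/

import Mathlib

open MeasureTheory intervalIntegral

/-- The Japanese bracket `⟨x⟩ = (1 + x²)^{1/2}`. -/
noncomputable def jap (x : ℝ) : ℝ := Real.sqrt (1 + x ^ 2)

/-!
For `α ≤ m ≤ β` and `1 ≤ L` one has `L + β - α ≥ max L ⟨m - α⟩`. Writing `1 - p = (1 - p + h) - h`,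
the negative power `1 - p + h` is spent on the small factor `L ^ (1 - p + h)` and the power `-h` on
`⟨m - α⟩ ^ (-h)`. What remains in `α` is the convolution of `⟨·⟩ ^ (-h)` with itself, which is
`O(⟨m⟩ ^ (-h))` because one of `⟨m - α⟩`, `⟨α⟩` is at least `⟨m⟩ / 2`. This bound is uniform in `β`,
so the singular weight can be integrated explicitly.
-/

lemma one_le_jap (x : ℝ) : 1 ≤ jap x :=
  Real.one_le_sqrt.2 (le_add_of_nonneg_right (sq_nonneg x))

lemma jap_pos (x : ℝ) : 0 < jap x :=
  one_pos.trans_le (one_le_jap x)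

lemma sq_jap (x : ℝ) : jap x ^ 2 = 1 + x ^ 2 :=
  Real.sq_sqrt (by positivity)

lemma abs_le_jap (x : ℝ) : |x| ≤ jap x :=
  Real.abs_le_sqrt (by linarith)

lemma jap_le_one_add {x : ℝ} (hx : 0 ≤ x) : jap x ≤ 1 + x :=
  Real.sqrt_le_iff.2 ⟨by linarith, by nlinarith⟩

lemma jap_add_le (x y : ℝ) : jap (x + y) ≤ jap x + jap y := by
  have hxy : x * y ≤ jap x * jap y :=
    calc x * y ≤ |x| * |y| := (le_abs_self _).trans_eq (abs_mul x y)
      _ ≤ jap x * jap y :=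
        mul_le_mul (abs_le_jap x) (abs_le_jap y) (abs_nonneg y) (jap_pos x).le
  refine Real.sqrt_le_iff.2 ⟨(add_pos (jap_pos x) (jap_pos y)).le, ?_⟩
  linarith [sq_jap x, sq_jap y, add_sq x y, add_sq (jap x) (jap y)]

lemma jap_rpow_nonneg (x s : ℝ) : 0 ≤ jap x ^ s :=
  Real.rpow_nonneg (jap_pos x).le s

lemma continuous_jap_rpow (s : ℝ) : Continuous fun x => jap x ^ s := by
  have hjap : Continuous jap := by unfold jap; fun_prop
  exact hjap.rpow_const fun x => Or.inl (jap_pos x).ne'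

lemma integrable_jap_rpow_neg {h : ℝ} (hh : 1 < h) : Integrable fun x => jap x ^ (-h) := by
  have hint : Integrable fun x : ℝ => (1 + ‖x‖ ^ 2) ^ (-h / 2) :=
    integrable_rpow_neg_one_add_norm_sq (by simpa using hh)
  refine hint.congr (.of_forall fun x => ?_)
  calc (1 + ‖x‖ ^ 2) ^ (-h / 2) = (1 + x ^ 2) ^ (-h / 2) := by rw [Real.norm_eq_abs, sq_abs]
    _ = jap x ^ (-h) := Real.rpow_div_two_eq_sqrt _ (by positivity)

lemma rpow_neg_mul_rpow_neg_le {a b c h : ℝ} (ha : 0 < a) (hb : 0 < b) (hc : 0 < c)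
    (hcab : c ≤ a + b) (hh : 0 ≤ h) :
    a ^ (-h) * b ^ (-h) ≤ 2 ^ h * c ^ (-h) * (a ^ (-h) + b ^ (-h)) := by
  wlog hab : a ≤ b generalizing a b
  · simpa only [mul_comm, add_comm] using this hb ha (by linarith) (le_of_not_ge hab)
  have hbc : b ^ (-h) ≤ 2 ^ h * c ^ (-h) :=
    calc b ^ (-h) ≤ (c / 2) ^ (-h) :=
          Real.rpow_le_rpow_of_nonpos (by positivity) (by linarith) (by linarith)
      _ = 2 ^ h * c ^ (-h) := by
          rw [Real.div_rpow hc.le zero_le_two, Real.rpow_neg zero_le_two, div_inv_eq_mul, mul_comm]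
  calc a ^ (-h) * b ^ (-h) ≤ a ^ (-h) * (2 ^ h * c ^ (-h)) := by gcongr
    _ = 2 ^ h * c ^ (-h) * a ^ (-h) := mul_comm _ _
    _ ≤ 2 ^ h * c ^ (-h) * (a ^ (-h) + b ^ (-h)) := by
        gcongr
        exact le_add_of_nonneg_right (by positivity)

lemma jap_rpow_neg_mul_le {h : ℝ} (hh : 0 ≤ h) (m x : ℝ) :
    jap (m - x) ^ (-h) * jap x ^ (-h) ≤
      2 ^ h * jap m ^ (-h) * (jap (m - x) ^ (-h) + jap x ^ (-h)) :=
  rpow_neg_mul_rpow_neg_le (jap_pos _) (jap_pos _) (jap_pos _)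
    (by simpa only [sub_add_cancel] using jap_add_le (m - x) x) hh

section Convolution

variable {h : ℝ} (hh : 1 < h) (m : ℝ)
include hh

lemma integrable_jap_rpow_neg_add :
    Integrable fun x => 2 ^ h * jap m ^ (-h) * (jap (m - x) ^ (-h) + jap x ^ (-h)) :=
  (((integrable_jap_rpow_neg hh).comp_sub_left m).add (integrable_jap_rpow_neg hh)).const_mul _

lemma integrable_jap_rpow_neg_mul :
    Integrable fun x => jap (m - x) ^ (-h) * jap x ^ (-h) := by
  have hcont : Continuous fun x => jap (m - x) ^ (-h) * jap x ^ (-h) :=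
    ((continuous_jap_rpow _).comp (continuous_sub_left m)).mul (continuous_jap_rpow _)
  refine (integrable_jap_rpow_neg_add hh m).mono' hcont.aestronglyMeasurable
    (.of_forall fun x => ?_)
  rw [Real.norm_of_nonneg (mul_nonneg (jap_rpow_nonneg _ _) (jap_rpow_nonneg _ _))]
  exact jap_rpow_neg_mul_le (by linarith) m x

lemma integral_jap_rpow_neg_mul_le :
    ∫ x, jap (m - x) ^ (-h) * jap x ^ (-h) ≤ 2 ^ (h + 1) * (∫ x, jap x ^ (-h)) * jap m ^ (-h) := by
  have hint := integrable_jap_rpow_neg hh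
  calc ∫ x, jap (m - x) ^ (-h) * jap x ^ (-h)
      ≤ ∫ x, 2 ^ h * jap m ^ (-h) * (jap (m - x) ^ (-h) + jap x ^ (-h)) :=
        integral_mono (integrable_jap_rpow_neg_mul hh m) (integrable_jap_rpow_neg_add hh m)
          (jap_rpow_neg_mul_le (by linarith) m)
    _ = 2 ^ h * jap m ^ (-h) * ((∫ x, jap x ^ (-h)) + ∫ x, jap x ^ (-h)) := by
        rw [MeasureTheory.integral_const_mul,
          MeasureTheory.integral_add (hint.comp_sub_left m) hint,
          integral_sub_left_eq_self (fun x => jap x ^ (-h)) volume m]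
    _ = 2 ^ (h + 1) * (∫ x, jap x ^ (-h)) * jap m ^ (-h) := by
        rw [Real.rpow_add_one two_ne_zero]; ring

end Convolution

lemma intervalIntegral_mono_of_nonneg {f g : ℝ → ℝ} {a b : ℝ} (hab : a ≤ b)
    (hf : ∀ x ∈ Set.Ioc a b, 0 ≤ f x) (hg : IntervalIntegrable g volume a b)
    (hfg : ∀ x ∈ Set.Ioc a b, f x ≤ g x) : ∫ x in a..b, f x ≤ ∫ x in a..b, g x := by
  rw [integral_of_le hab, integral_of_le hab]
  exact integral_mono_of_nonneg (ae_restrict_of_forall_mem measurableSet_Ioc hf) hg.1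
    (ae_restrict_of_forall_mem measurableSet_Ioc hfg)

lemma intervalIntegrable_sub_rpow {γ : ℝ} (hγ : -1 < γ) (a b : ℝ) :
    IntervalIntegrable (fun x => (x - a) ^ γ) volume a b := by
  simpa using (intervalIntegrable_rpow' (a := 0) (b := b - a) hγ).comp_sub_right a

lemma integral_sub_rpow {γ : ℝ} (hγ : -1 < γ) (a b : ℝ) :
    ∫ x in a..b, (x - a) ^ γ = (b - a) ^ (γ + 1) / (γ + 1) := by
  rw [integral_comp_sub_right (fun x => x ^ γ) a, sub_self, integral_rpow (Or.inl hγ),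
    Real.zero_rpow (by linarith), sub_zero]

lemma integral_mul_sub_rpow_le {F : ℝ → ℝ} {γ a b B : ℝ} (hγ : -1 < γ) (hab : a ≤ b)
    (hF : ∀ x ∈ Set.Ioc a b, 0 ≤ F x) (hFB : ∀ x ∈ Set.Ioc a b, F x ≤ B) :
    ∫ x in a..b, F x * (x - a) ^ γ ≤ B * ((b - a) ^ (γ + 1) / (γ + 1)) := by
  have hw : ∀ x ∈ Set.Ioc a b, 0 ≤ (x - a) ^ γ := fun x hx =>
    Real.rpow_nonneg (sub_nonneg.2 hx.1.le) γ
  rw [← integral_sub_rpow hγ, ← intervalIntegral.integral_const_mul]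
  exact intervalIntegral_mono_of_nonneg hab (fun x hx => mul_nonneg (hF x hx) (hw x hx))
    ((intervalIntegrable_sub_rpow hγ a b).const_mul B)
    fun x hx => mul_le_mul_of_nonneg_right (hFB x hx) (hw x hx)

section Kernel

variable {h r L a m α β : ℝ}

lemma rpow_le_rpow_mul_jap_rpow_neg (hh : 0 ≤ h) (hr : r + h ≤ 0) (hL : 1 ≤ L) (hα : α ≤ m)
    (hβ : m ≤ β) :
    (L + β - α) ^ r ≤ L ^ (r + h) * jap (m - α) ^ (-h) := by
  have hbracket : jap (m - α) ≤ L + β - α :=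
    (jap_le_one_add (sub_nonneg.2 hα)).trans (by linarith)
  have hpos : 0 < L + β - α := (jap_pos _).trans_le hbracket
  calc (L + β - α) ^ r = (L + β - α) ^ (r + h) * (L + β - α) ^ (-h) := by
        rw [← Real.rpow_add hpos, add_neg_cancel_right]
    _ ≤ L ^ (r + h) * jap (m - α) ^ (-h) :=
        mul_le_mul (Real.rpow_le_rpow_of_nonpos (by linarith) (by linarith) hr)
          (Real.rpow_le_rpow_of_nonpos (jap_pos _) hbracket (by linarith))
          (by positivity) (by positivity)

lemma kernel_nonneg (hL : 0 ≤ L) (hα : α ≤ m) (hβ : m ≤ β) :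
    0 ≤ (L + β - α) ^ r * jap α ^ (-h) :=
  mul_nonneg (Real.rpow_nonneg (by linarith) r) (jap_rpow_nonneg α _)

lemma integral_kernel_le (hh : 1 < h) (hr : r + h ≤ 0) (hL : 1 ≤ L) (ha : a ≤ m) (hβ : m ≤ β) :
    ∫ α in a..m, (L + β - α) ^ r * jap α ^ (-h) ≤
      L ^ (r + h) * (2 ^ (h + 1) * (∫ x, jap x ^ (-h)) * jap m ^ (-h)) := by
  have hconv := integrable_jap_rpow_neg_mul hh m
  calc ∫ α in a..m, (L + β - α) ^ r * jap α ^ (-h)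
      ≤ ∫ α in a..m, L ^ (r + h) * (jap (m - α) ^ (-h) * jap α ^ (-h)) := by
        refine intervalIntegral_mono_of_nonneg ha
          (fun α hα => kernel_nonneg (by linarith) hα.2 hβ)
          (hconv.const_mul _).intervalIntegrable fun α hα => ?_
        rw [← mul_assoc]
        exact mul_le_mul_of_nonneg_right
          (rpow_le_rpow_mul_jap_rpow_neg (by linarith) hr hL hα.2 hβ) (jap_rpow_nonneg α _)
    _ = L ^ (r + h) * ∫ α in a..m, jap (m - α) ^ (-h) * jap α ^ (-h) :=
        intervalIntegral.integral_const_mul _ _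
    _ ≤ L ^ (r + h) * ∫ α, jap (m - α) ^ (-h) * jap α ^ (-h) := by
        rw [integral_of_le ha]
        exact mul_le_mul_of_nonneg_left (setIntegral_le_integral hconv (.of_forall fun α =>
          mul_nonneg (jap_rpow_nonneg _ _) (jap_rpow_nonneg _ _))) (by positivity)
    _ ≤ L ^ (r + h) * (2 ^ (h + 1) * (∫ x, jap x ^ (-h)) * jap m ^ (-h)) := by
        gcongr
        exact integral_jap_rpow_neg_mul_le hh m

lemma integral_integral_kernel_le {γ : ℝ} (hh : 1 < h) (hr : r + h ≤ 0) (hγ : -1 < γ) (hL : 1 ≤ L)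
    (hm : 0 ≤ m) :
    ∫ β in m..(m + 1), ∫ α in (-β)..m, (L + β - α) ^ r * jap α ^ (-h) * (β - m) ^ γ ≤
      L ^ (r + h) * (2 ^ (h + 1) * (∫ x, jap x ^ (-h)) / (γ + 1)) * jap m ^ (-h) := by
  have hleft : ∀ β ∈ Set.Ioc m (m + 1), -β ≤ m := fun β hβ => by linarith [hβ.1]
  simp only [intervalIntegral.integral_mul_const]
  refine (integral_mul_sub_rpow_le hγ (by linarith)
    (fun β hβ => integral_nonneg (hleft β hβ)
      fun α hα => kernel_nonneg (by linarith) hα.2 hβ.1.le)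
    fun β hβ => integral_kernel_le hh hr hL (hleft β hβ) hβ.1.le).trans_eq ?_
  rw [add_sub_cancel_left, Real.one_rpow]
  ring

end Kernel

theorem interior_region_estimate_three_general (p h γ : ℝ) (hh1 : 1 < h) (hh2 : h < p - 1)
    (hγ : -1 < γ) :
    ∀ c : ℝ, 0 < c → ∃ L₀ : ℝ, 1 ≤ L₀ ∧ ∀ L : ℝ, L₀ ≤ L → ∀ m : ℝ, 0 ≤ m →
      (∫ β in m..(m + 1), ∫ α in (-β)..m,
        (L + β - α) ^ (1 - p) * jap α ^ (-h) * (β - m) ^ γ)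
      ≤ c * jap m ^ (-h) := by
  intro c hc
  set C : ℝ := 2 ^ (h + 1) * (∫ x, jap x ^ (-h)) / (γ + 1)
  have hlim : Filter.Tendsto (fun L : ℝ => L ^ (1 - p + h) * C) Filter.atTop (nhds 0) := by
    have hpow := tendsto_rpow_neg_atTop (y := -(1 - p + h)) (by linarith)
    simpa only [neg_neg, zero_mul] using hpow.mul_const C
  obtain ⟨L₀, hL₀, hsmall⟩ := (Filter.atTop_basis' (1 : ℝ)).eventually_iff.1
    (hlim.eventually_le_const hc)
  exact ⟨L₀, hL₀, fun L hL m hm =>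
    (integral_integral_kernel_le hh1 (by linarith) hγ (hL₀.trans hL) hm).trans
      (mul_le_mul_of_nonneg_right (hsmall hL) (jap_rpow_nonneg m _))⟩

theorem interior_region_estimate_three (p h : ℝ) (hp : 3 < p) (hh1 : 1 < h) (hh2 : h < p - 1) :
    ∀ c : ℝ, 0 < c → ∃ L₀ : ℝ, 1 ≤ L₀ ∧ ∀ L : ℝ, L₀ ≤ L → ∀ m : ℝ, 0 ≤ m →
      (∫ β in m..(m + 1), ∫ α in (-β)..m,
        (L + β - α) ^ (1 - p) * jap α ^ (-h) * (β - m) ^ (-(1 / 2) : ℝ))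
      ≤ c * jap m ^ (-h) :=
  interior_region_estimate_three_general p h _ hh1 hh2 (by norm_num)
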